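/- arXiv:1504.04279 — 7 statements merged into one kernel-verified Lean document; each statement's English description precedes it below -/
import Mathlib

section
/- Let X be a pure simplicial complex on a finite vertex set V and let A be a nonempty induced subcomplex of X, say A = X|_W for W ⊆ V, such that the relative simplicial complex Q = X ∖ A is not partitionable. Let k be the total number of faces of A (including the empty face) and let N > k. Let C_N be the simplicial complex on the vertex set W ⊔ ({1,…,N} × (V∖W)) obtained by gluing N disjoint copies of X along A, i.e. the faces of C_N are the sets φ_i(σ) for σ ∈ X and 1 ≤ i ≤ N, where φ_i fixes the vertices in W and sends each vertex v ∈ V∖W to (i,v). Then C_N is not partitionable. -/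
/-- The facets (maximal faces) of a collection of finite sets. -/
def facets {V : Type*} [DecidableEq V] (Φ : Finset (Finset V)) : Finset (Finset V) :=
  Φ.filter (fun F => ∀ G ∈ Φ, F ⊆ G → F = G)

/-- A (relative or absolute) simplicial complex `Φ` is partitionable if it decomposes as a
disjoint union of Boolean intervals `[R F, F]`, one for each facet `F`. -/
def Partitionable {V : Type*} [DecidableEq V] (Φ : Finset (Finset V)) : Prop :=
  ∃ R : Finset V → Finset V,
    (∀ F ∈ facets Φ, R F ⊆ F) ∧
    (∀ F ∈ facets Φ, ∀ σ : Finset V, R F ⊆ σ → σ ⊆ F → σ ∈ Φ) ∧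
    (∀ σ ∈ Φ, ∃! F, F ∈ facets Φ ∧ R F ⊆ σ ∧ σ ⊆ F)

theorem mem_of_mem_facets {V : Type*} [DecidableEq V] {Φ : Finset (Finset V)} {F : Finset V}
    (hF : F ∈ facets Φ) : F ∈ Φ :=
  Finset.mem_of_mem_filter F hF

section Gluing

variable {V : Type*} [DecidableEq V] {W : Finset V} {φ : ℕ → V → V ⊕ (ℕ × V)}

theorem gluing_injective (hφ : ∀ i v, φ i v = if v ∈ W then Sum.inl v else Sum.inr (i, v))
    (i : ℕ) : Function.Injective (φ i) := by
  intro a b h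
  rw [hφ, hφ] at h
  split_ifs at h <;> simp_all

theorem inr_mem_image_gluing
    (hφ : ∀ i v, φ i v = if v ∈ W then Sum.inl v else Sum.inr (i, v))
    {i j : ℕ} {v : V} {σ : Finset V} :
    Sum.inr (i, v) ∈ σ.image (φ j) ↔ i = j ∧ v ∉ W ∧ v ∈ σ := by
  rw [Finset.mem_image]
  constructor
  · rintro ⟨a, ha, h⟩
    rw [hφ] at h
    split_ifs at h
    simp_all
  · rintro ⟨rfl, hv, hσ⟩
    exact ⟨v, hσ, by rw [hφ, if_neg hv]⟩

/-- The copies of a face of the shared subcomplex all coincide. -/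
theorem image_gluing_eq_of_subset
    (hφ : ∀ i v, φ i v = if v ∈ W then Sum.inl v else Sum.inr (i, v))
    {σ : Finset V} (hσ : σ ⊆ W) (i j : ℕ) : σ.image (φ i) = σ.image (φ j) := by
  refine Finset.image_congr fun v hv => ?_
  simp only [hφ, if_pos (hσ hv)]

end Gluing

/-- Let `X` be a pure simplicial complex on a finite vertex set `V`, and let
`A = X|_W` be a nonempty induced subcomplex such that the relative complex
`Q = X ∖ A` is not partitionable.  If `N` exceeds the number `k` of faces of `A`,
then the complex `C_N`, obtained by gluing `N` disjoint copies of `X` along `A`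
(the `i`-th copy embedded via `φ_i`, which fixes the vertices in `W` and sends each
vertex `v ∉ W` to `(i, v)`), is not partitionable. -/
theorem glued_complex_not_partitionable
    {V : Type*} [DecidableEq V] [Fintype V]
    (X : Finset (Finset V))
    (hcomplex : ∀ σ ∈ X, ∀ τ ⊆ σ, τ ∈ X)
    (hpure : ∀ F ∈ facets X, ∀ G ∈ facets X, F.card = G.card)
    (W : Finset V)
    (A : Finset (Finset V)) (hA : A = X.filter (fun σ => σ ⊆ W))
    (hAne : A.Nonempty)
    (hQ : ¬ Partitionable (X \ A))
    (N : ℕ) (hN : N > A.card)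
    (φ : ℕ → V → V ⊕ (ℕ × V))
    (hφ : ∀ i v, φ i v = if v ∈ W then Sum.inl v else Sum.inr (i, v))
    (CN : Finset (Finset (V ⊕ (ℕ × V))))
    (hCN : CN = (Finset.Icc 1 N).biUnion (fun i => X.image (fun σ => σ.image (φ i)))) :
    ¬ Partitionable CN := by
  rintro ⟨R, hR, hint, hcov⟩
  have hmem : ∀ G, G ∈ CN ↔ ∃ i ∈ Finset.Icc 1 N, ∃ σ ∈ X, σ.image (φ i) = G := by
    intro G
    simp only [hCN, Finset.mem_biUnion, Finset.mem_image]
  have memA : ∀ σ, σ ∈ A ↔ σ ∈ X ∧ σ ⊆ W := fun σ => by rw [hA, Finset.mem_filter]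
  have memQ : ∀ σ, σ ∈ X \ A ↔ σ ∈ X ∧ ¬ σ ⊆ W := by
    intro σ
    rw [Finset.mem_sdiff, memA]
    tauto
  -- By pigeonhole some copy has no facet outside `A` whose interval meets `A`.
  obtain ⟨i, hi, hfree⟩ : ∃ i ∈ Finset.Icc 1 N, ∀ σ ∈ A, ∀ F ∈ facets CN,
      R F ⊆ σ.image (φ i) → σ.image (φ i) ⊆ F → ∀ v, Sum.inr (i, v) ∉ F := by
    by_contra! hcon
    choose! s hsA F hF hRF hsF v hv using hcon
    obtain ⟨i, hi, j, hj, hij, hs⟩ := Finset.exists_ne_map_eq_of_card_lt_of_maps_to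
      (s := Finset.Icc 1 N) (t := A) (f := s) (by simpa using hN) hsA
    have hsW : s i ⊆ W := ((memA _).1 (hsA i hi)).2
    have himg : (s j).image (φ j) = (s i).image (φ i) := by
      rw [← hs]
      exact image_gluing_eq_of_subset hφ hsW j i
    have hFF : F i = F j :=
      (hcov _ ((hmem _).2 ⟨i, hi, s i, ((memA _).1 (hsA i hi)).1, rfl⟩)).unique
        ⟨hF i hi, hRF i hi, hsF i hi⟩
        ⟨hF j hj, himg ▸ hRF j hj, himg ▸ hsF j hj⟩
    obtain ⟨l, -, τ, -, hτ⟩ := (hmem _).1 (mem_of_mem_facets (hF i hi))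
    have h₁ := hv i hi
    have h₂ := hv j hj
    rw [← hFF] at h₂
    rw [← hτ, inr_mem_image_gluing hφ] at h₁ h₂
    exact hij (h₁.1.trans h₂.1.symm)
  have hinj := gluing_injective hφ i
  have hcopy : ∀ σ, ¬ σ ⊆ W → ∀ G ∈ CN, σ.image (φ i) ⊆ G →
      ∃ τ ∈ X, τ.image (φ i) = G ∧ σ ⊆ τ := by
    intro σ hσ G hG hsub
    obtain ⟨j, -, τ, hτ, rfl⟩ := (hmem _).1 hG
    obtain ⟨v, hvσ, hvW⟩ := Finset.not_subset.1 hσ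
    have hvi := hsub ((inr_mem_image_gluing hφ).2 ⟨rfl, hvW, hvσ⟩)
    obtain ⟨rfl, -⟩ := (inr_mem_image_gluing hφ).1 hvi
    exact ⟨τ, hτ, rfl, (Finset.image_subset_image_iff hinj).1 hsub⟩
  have hfacet : ∀ F, F ∈ facets (X \ A) ↔ ¬ F ⊆ W ∧ F.image (φ i) ∈ facets CN := by
    intro F
    simp only [facets, Finset.mem_filter, memQ]
    constructor
    · rintro ⟨⟨hFX, hFW⟩, hmax⟩
      refine ⟨hFW, (hmem _).2 ⟨i, hi, F, hFX, rfl⟩, fun G hG hsub => ?_⟩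
      obtain ⟨τ, hτ, rfl, hFτ⟩ := hcopy F hFW G hG hsub
      rw [← hmax τ ⟨hτ, fun h => hFW (hFτ.trans h)⟩ hFτ]
    · rintro ⟨hFW, hF, hmax⟩
      obtain ⟨τ, hτ, hτF, -⟩ := hcopy F hFW _ hF subset_rfl
      obtain rfl := Finset.image_injective hinj hτF
      exact ⟨⟨hτ, hFW⟩, fun G hG hsub => Finset.image_injective hinj
        (hmax _ ((hmem _).2 ⟨i, hi, G, hG.1, rfl⟩) (Finset.image_subset_image hsub))⟩
  have hpull : ∀ F ∈ facets (X \ A), ∀ σ : Finset V,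
      F.filter (fun v => φ i v ∈ R (F.image (φ i))) ⊆ σ ↔
        R (F.image (φ i)) ⊆ σ.image (φ i) := by
    intro F hF σ
    constructor
    · intro h x hx
      obtain ⟨v, hv, rfl⟩ := Finset.mem_image.1 (hR _ ((hfacet F).1 hF).2 hx)
      exact Finset.mem_image_of_mem _ (h (Finset.mem_filter.2 ⟨hv, hx⟩))
    · intro h v hv
      exact hinj.mem_finset_image.1 (h (Finset.mem_filter.1 hv).2)
  refine hQ ⟨fun F => F.filter (fun v => φ i v ∈ R (F.image (φ i))),
    fun F _ => Finset.filter_subset _ _, fun F hF σ hRσ hσF => ?_, fun σ hσ => ?_⟩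
  · have hFX := (memQ F).1 (mem_of_mem_facets hF)
    have hσX := hcomplex F hFX.1 σ hσF
    refine (memQ σ).2 ⟨hσX, fun hσW => ?_⟩
    obtain ⟨v, hvF, hvW⟩ := Finset.not_subset.1 hFX.2
    exact hfree σ ((memA σ).2 ⟨hσX, hσW⟩) _ ((hfacet F).1 hF).2 ((hpull F hF σ).1 hRσ)
      (Finset.image_subset_image hσF) v ((inr_mem_image_gluing hφ).2 ⟨rfl, hvW, hvF⟩)
  · obtain ⟨hσX, hσW⟩ := (memQ σ).1 hσ
    obtain ⟨G, ⟨hG, hRG, hσG⟩, huniq⟩ := hcov _ ((hmem _).2 ⟨i, hi, σ, hσX, rfl⟩)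
    obtain ⟨F, -, rfl, hσF⟩ := hcopy σ hσW G (mem_of_mem_facets hG) hσG
    have hF := (hfacet F).2 ⟨fun h => hσW (hσF.trans h), hG⟩
    refine ⟨F, ⟨hF, (hpull F hF σ).2 hRG, hσF⟩, ?_⟩
    rintro F' ⟨hF', hRF', hσF'⟩
    exact Finset.image_injective hinj (huniq _ ⟨((hfacet F').1 hF').2,
      (hpull F' hF' σ).1 hRF', Finset.image_subset_image hσF'⟩)
end

section
/- The relative simplicial complex Q = X̄ ∖ A is not partitionable. -/
/-- The simplicial complex generated by a list of facets. -/
def gen (L : List (Finset ℕ)) : Finset (Finset ℕ) :=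
  L.toFinset.biUnion Finset.powerset

/-- The combinatorial closure `X̄` of the relative complex `Q`, a simplicial complex on
vertices `{0,…,9}` with fourteen facets. -/
def Xbar : Finset (Finset ℕ) :=
  gen [{1,2,4,9},{1,2,6,9},{1,5,6,9},{1,5,8,9},{1,4,8,9},{1,4,5,8},{1,4,5,7},
       {4,5,7,8},{1,2,5,6},{0,1,2,5},{0,2,5,6},{0,1,2,3},{1,2,3,4},{1,3,4,7}]

/-- The subcomplex `A` of `X̄`, generated by five triangles. -/
def Acx : Finset (Finset ℕ) :=
  gen [{0,2,6},{0,2,3},{2,3,4},{3,4,7},{4,7,8}]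

section Owner

variable {V : Type*} [DecidableEq V] {Φ : Finset (Finset V)} {R : Finset V → Finset V}
  {F σ τ ρ : Finset V}

/-- The face `σ` lies in the interval `[R F, F]` of the facet `F` of `Φ`. -/
def Owns (Φ : Finset (Finset V)) (R : Finset V → Finset V) (F σ : Finset V) : Prop :=
  F ∈ facets Φ ∧ R F ⊆ σ ∧ σ ⊆ F

theorem Owns.inter (hσ : Owns Φ R F σ) (hτ : Owns Φ R F τ) (h : σ ∩ τ = ρ) :
    Owns Φ R F ρ :=
  h ▸ ⟨hσ.1, Finset.subset_inter hσ.2.1 hτ.2.1, Finset.inter_subset_left.trans hσ.2.2⟩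

theorem Owns.mono (hσ : Owns Φ R F σ) (hστ : σ ⊆ τ) (hτ : τ ⊆ F) : Owns Φ R F τ :=
  ⟨hσ.1, hσ.2.1.trans hστ, hτ⟩

end Owner

theorem mem_gen {L : List (Finset ℕ)} {σ : Finset ℕ} : σ ∈ gen L ↔ ∃ F ∈ L, σ ⊆ F := by
  simp [gen]

/-- The facets of `X̄`. -/
def XbarFacets : List (Finset ℕ) :=
  [{1,2,4,9},{1,2,6,9},{1,5,6,9},{1,5,8,9},{1,4,8,9},{1,4,5,8},{1,4,5,7},
    {4,5,7,8},{1,2,5,6},{0,1,2,5},{0,2,5,6},{0,1,2,3},{1,2,3,4},{1,3,4,7}]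

/-- Membership in `Q = X̄ ∖ A`, in terms of generating faces only. -/
abbrev IsFaceQ (σ : Finset ℕ) : Prop :=
  (∃ F ∈ XbarFacets, σ ⊆ F) ∧
    ¬ ∃ F ∈ [({0,2,6} : Finset ℕ),{0,2,3},{2,3,4},{3,4,7},{4,7,8}], σ ⊆ F

theorem mem_Q {σ : Finset ℕ} : σ ∈ Xbar \ Acx ↔ IsFaceQ σ := by
  rw [Finset.mem_sdiff, Xbar, Acx, mem_gen, mem_gen, IsFaceQ, XbarFacets]

theorem mem_XbarFacets_of_mem_facets {F : Finset ℕ} (hF : F ∈ facets (Xbar \ Acx)) :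
    F ∈ XbarFacets := by
  obtain ⟨hFQ, hmax⟩ := Finset.mem_filter.1 hF
  obtain ⟨⟨G, hG, hFG⟩, -⟩ := mem_Q.1 hFQ
  have hface : ∀ G ∈ XbarFacets, IsFaceQ G := by decide +kernel
  rwa [hmax G (mem_Q.2 (hface G hG)) hFG]

/-- The relative simplicial complex `Q = X̄ ∖ A` is not partitionable. -/
theorem Q_not_partitionable : ¬ Partitionable (Xbar \ Acx) := by
  rintro ⟨R, -, hmem, hcover⟩
  let Own := Owns (Xbar \ Acx) R
  have face {F σ} (h : Own F σ) : IsFaceQ σ :=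
    mem_Q.1 (hmem F h.1 σ h.2.1 h.2.2)
  have unique {F G σ} (hF : Own F σ) (hG : Own G σ) : F = G :=
    (hcover σ (mem_Q.2 (face hF))).unique hF hG
  have owner (σ) (S : Finset (Finset ℕ)) (hσ : IsFaceQ σ)
      (hS : ∀ F ∈ XbarFacets, σ ⊆ F → F ∈ S) : ∃ F ∈ S, Own F σ := by
    obtain ⟨F, hF, -⟩ := hcover σ (mem_Q.2 hσ)
    exact ⟨F, hS F (mem_XbarFacets_of_mem_facets hF.1) hF.2.2, hF⟩
  have disjoint {F σ τ} (hσ : Own F σ) (hτ : Own F τ) (h : ¬ IsFaceQ (σ ∩ τ)) : False :=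
    h (face (hσ.inter hτ rfl))
  -- Triangles lying in a single facet.
  have only (σ F) (hσ : IsFaceQ σ)
      (hF : ∀ G ∈ XbarFacets, σ ⊆ G → G ∈ ({F} : Finset (Finset ℕ))) :
      Own F σ := by
    obtain ⟨G, hG, h⟩ := owner σ {F} hσ hF
    rwa [Finset.mem_singleton.1 hG] at h
  have h269 := only {2,6,9} {1,2,6,9} (by decide +kernel) (by decide +kernel)
  have h569 := only {5,6,9} {1,5,6,9} (by decide +kernel) (by decide +kernel)
  have h589 := only {5,8,9} {1,5,8,9} (by decide +kernel) (by decide +kernel)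
  have h489 := only {4,8,9} {1,4,8,9} (by decide +kernel) (by decide +kernel)
  have h056 := only {0,5,6} {0,2,5,6} (by decide +kernel) (by decide +kernel)
  have h015 := only {0,1,5} {0,1,2,5} (by decide +kernel) (by decide +kernel)
  have h578 := only {5,7,8} {4,5,7,8} (by decide +kernel) (by decide +kernel)
  have h157 := only {1,5,7} {1,4,5,7} (by decide +kernel) (by decide +kernel)
  -- Neither `6` nor `8` is a face of `Q`, which determines the owners of `16` and `18`.
  have h16 : Own {1,2,5,6} {1,6} := by
    obtain ⟨F, hF, h⟩ := owner {1,6} {{1,2,6,9},{1,5,6,9},{1,2,5,6}}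
      (by decide +kernel) (by decide +kernel)
    simp only [Finset.mem_insert, Finset.mem_singleton] at hF
    rcases hF with rfl | rfl | rfl
    · exact (disjoint h h269 (by decide +kernel)).elim
    · exact (disjoint h h569 (by decide +kernel)).elim
    · exact h
  have h18 : Own {1,4,5,8} {1,8} := by
    obtain ⟨F, hF, h⟩ := owner {1,8} {{1,5,8,9},{1,4,8,9},{1,4,5,8}}
      (by decide +kernel) (by decide +kernel)
    simp only [Finset.mem_insert, Finset.mem_singleton] at hF
    rcases hF with rfl | rfl | rfl
    · exact (disjoint h h589 (by decide +kernel)).elim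
    · exact (disjoint h h489 (by decide +kernel)).elim
    · exact h
  have h256 : Own {0,2,5,6} {2,5,6} := by
    obtain ⟨F, hF, h⟩ := owner {2,5,6} {{1,2,5,6},{0,2,5,6}}
      (by decide +kernel) (by decide +kernel)
    simp only [Finset.mem_insert, Finset.mem_singleton] at hF
    rcases hF with rfl | rfl
    · exact (disjoint h h16 (by decide +kernel)).elim
    · exact h
  -- Whichever facet owns `025` also owns `5`.
  have h5 : Own {0,1,2,5} {5} ∨ Own {0,2,5,6} {5} := by
    obtain ⟨F, hF, h025⟩ := owner {0,2,5} {{0,1,2,5},{0,2,5,6}}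
      (by decide +kernel) (by decide +kernel)
    simp only [Finset.mem_insert, Finset.mem_singleton] at hF
    rcases hF with rfl | rfl
    · obtain ⟨G, hG, h25⟩ := owner {2,5} {{0,1,2,5},{0,2,5,6},{1,2,5,6}}
        (by decide +kernel) (by decide +kernel)
      simp only [Finset.mem_insert, Finset.mem_singleton] at hG
      rcases hG with rfl | rfl | rfl
      · exact .inl (h25.inter h015 (by decide))
      · exact absurd (unique h025 (h25.mono (by decide) (by decide))) (by decide)
      · exact (disjoint h25 h16 (by decide +kernel)).elim
    · exact .inr ((h025.inter h256 rfl).inter h056 (by decide))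
  -- Any owner of `45` contradicts this.
  obtain ⟨F, hF, h45⟩ := owner {4,5} {{1,4,5,7},{1,4,5,8},{4,5,7,8}}
    (by decide +kernel) (by decide +kernel)
  simp only [Finset.mem_insert, Finset.mem_singleton] at hF
  rcases hF with rfl | rfl | rfl
  · have h : Own {1,4,5,7} {5} := h45.inter h157 (by decide)
    rcases h5 with h5 | h5 <;> exact absurd (unique h h5) (by decide)
  · exact disjoint h45 h18 (by decide +kernel)
  · have h : Own {4,5,7,8} {5} := h45.inter h578 (by decide)
    rcases h5 with h5 | h5 <;> exact absurd (unique h h5) (by decide)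
end

section
/- The simplicial complex C_25 obtained by gluing 25 disjoint copies of X̄ along A is not partitionable. -/
/-- The map on vertices defining the `i`-th copy of `X̄` in the glued complex `C_N`:
vertices of `A` (i.e. those in `{0,2,3,4,6,7,8}`) are fixed, and each vertex
`v ∈ {1,5,9}` is sent to `(i, v)`. -/
def glueVertex (i : ℕ) (v : ℕ) : ℕ ⊕ (ℕ × ℕ) :=
  if v = 1 ∨ v = 5 ∨ v = 9 then Sum.inr (i, v) else Sum.inl v

/-- The image `φ_i(σ)` of a face `σ` of `X̄` in the `i`-th copy of `X̄`. -/
def phi (i : ℕ) (σ : Finset ℕ) : Finset (ℕ ⊕ (ℕ × ℕ)) :=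
  σ.image (glueVertex i)

/-- The simplicial complex `C_N` obtained by gluing `N` disjoint copies of `X̄` along `A`. -/
def C (N : ℕ) : Finset (Finset (ℕ ⊕ (ℕ × ℕ))) :=
  (Finset.Icc 1 N).biUnion (fun i => Xbar.image (phi i))


/-- The vertices of `X̄` that do not lie in `A`. -/
def privateVertices : Finset ℕ := {1, 5, 9}

/-- The facets of the complex generated by an antichain are its generators. -/
theorem facets_gen {L : List (Finset ℕ)} (hL : ∀ F ∈ L, ∀ G ∈ L, F ⊆ G → F = G) :
    facets (gen L) = L.toFinset := by
  ext F
  rw [facets, Finset.mem_filter]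
  simp only [gen, Finset.mem_biUnion, Finset.mem_powerset, List.mem_toFinset]
  constructor
  · rintro ⟨⟨G, hG, hFG⟩, hmax⟩
    exact hmax G ⟨G, hG, subset_rfl⟩ hFG ▸ hG
  · refine fun hF => ⟨⟨F, hF, subset_rfl⟩, ?_⟩
    rintro G ⟨H, hH, hGH⟩ hFG
    exact hFG.antisymm (hL F hF H hH (hFG.trans hGH) ▸ hGH)

theorem facets_Xbar : facets Xbar =
    {{1,2,4,9},{1,2,6,9},{1,5,6,9},{1,5,8,9},{1,4,8,9},{1,4,5,8},{1,4,5,7},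
     {4,5,7,8},{1,2,5,6},{0,1,2,5},{0,2,5,6},{0,1,2,3},{1,2,3,4},{1,3,4,7}} := by
  rw [Xbar, facets_gen (by decide +kernel)]
  simp only [List.toFinset_cons, List.toFinset_nil, insert_empty_eq]

theorem mem_Xbar_iff {σ : Finset ℕ} : σ ∈ Xbar ↔ ∃ F ∈ facets Xbar, σ ⊆ F := by
  rw [Xbar, facets_gen (by decide +kernel)]
  simp only [gen, Finset.mem_biUnion, Finset.mem_powerset]

/-- The faces of `X̄` without private vertices are faces of `A`, which has 24 faces. -/
theorem card_Xbar_disjoint_le :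
    (Xbar.filter fun σ => Disjoint σ privateVertices).card ≤ 24 := by
  have hcard : (gen [{0,2,6},{0,2,3},{2,3,4},{3,4,7},{4,7,8}]).card = 24 := by decide +kernel
  have hfacet : ∀ F ∈ facets Xbar,
      F \ privateVertices ∈ gen [{0,2,6},{0,2,3},{2,3,4},{3,4,7},{4,7,8}] := by
    rw [facets_Xbar]; decide +kernel
  refine hcard ▸ Finset.card_le_card fun σ hσ => ?_
  obtain ⟨hσX, hd⟩ := Finset.mem_filter.mp hσ
  obtain ⟨F, hF, hσF⟩ := mem_Xbar_iff.mp hσX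
  obtain ⟨B, hB, hFB⟩ := Finset.mem_biUnion.mp (hfacet F hF)
  exact Finset.mem_biUnion.mpr ⟨B, hB, Finset.mem_powerset.mpr
    ((Finset.subset_sdiff.mpr ⟨hσF, hd⟩).trans (Finset.mem_powerset.mp hFB))⟩

theorem facets_Xbar_not_disjoint :
    ∀ F ∈ facets Xbar, ¬ Disjoint F privateVertices := by
  rw [facets_Xbar]; decide +kernel

/-- The relative complex `(X̄, A)` is not partitionable. -/
theorem relative_not_partitionable (S : Finset ℕ → Finset ℕ)
    (hS : ∀ F ∈ facets Xbar, ¬ Disjoint (S F) privateVertices)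
    (hcov : ∀ σ ∈ Xbar, ¬ Disjoint σ privateVertices →
      ∃! F, F ∈ facets Xbar ∧ S F ⊆ σ ∧ σ ⊆ F) : False := by
  have hex : ∀ (σ : Finset ℕ) (T : Finset (Finset ℕ)), (facets Xbar).filter (σ ⊆ ·) = T →
      T.Nonempty → ¬ Disjoint σ privateVertices → ∃ F ∈ T, S F ⊆ σ := by
    rintro σ _ rfl ⟨G, hG⟩ hd
    obtain ⟨F, ⟨hF, hSF, hσF⟩, -⟩ :=
      hcov σ (mem_Xbar_iff.mpr ⟨G, Finset.mem_filter.mp hG⟩) hd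
    exact ⟨F, Finset.mem_filter.mpr ⟨hF, hσF⟩, hSF⟩
  -- a face lying in a single facet bounds the restriction of that facet
  have hfree : ∀ σ F, (facets Xbar).filter (σ ⊆ ·) = {F} →
      ¬ Disjoint σ privateVertices → S F ⊆ σ := fun σ F hF hd => by
    obtain ⟨G, hG, hSG⟩ := hex σ {F} hF ⟨F, Finset.mem_singleton_self F⟩ hd
    exact Finset.mem_singleton.mp hG ▸ hSG
  -- an interval containing two faces contains their intersection, which is not in `A`
  have hmeet : ∀ {σ τ F}, F ∈ facets Xbar → Disjoint (σ ∩ τ) privateVertices →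
      S F ⊆ σ → S F ⊆ τ → False := fun hF hd h₁ h₂ =>
    hS _ hF (hd.mono_left (Finset.subset_inter h₁ h₂))
  have hedge : ∀ F ∈ facets Xbar, ∀ G ∈ facets Xbar, {1,5} ⊆ F → {1,5} ⊆ G →
      S F ⊆ {1,5} → S G ⊆ {1,5} → F = G := fun F hF G hG hF' hG' hSF hSG =>
    (hcov {1,5} (mem_Xbar_iff.mpr ⟨F, hF, hF'⟩) (by decide)).unique ⟨hF, hSF, hF'⟩ ⟨hG, hSG, hG'⟩
  have hinter : ∀ {σ τ F : Finset ℕ}, S F ⊆ σ → S F ⊆ τ → σ ∩ τ ⊆ {1,5} → S F ⊆ {1,5} :=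
    fun h₁ h₂ h => (Finset.subset_inter h₁ h₂).trans h
  clear hS hcov
  rw [facets_Xbar] at *
  have h1256 : S {1,2,5,6} ⊆ {1,6} := by
    obtain ⟨F, hF, h⟩ := hex {1,6} {{1,2,6,9}, {1,5,6,9}, {1,2,5,6}}
      (by decide +kernel) (by simp) (by decide)
    simp only [Finset.mem_insert, Finset.mem_singleton] at hF
    obtain rfl | rfl | rfl := hF
    · exact (hmeet (by decide +kernel) (by decide) h
        (hfree {2,6,9} _ (by decide +kernel) (by decide))).elim
    · exact (hmeet (by decide +kernel) (by decide) h
        (hfree {5,6,9} _ (by decide +kernel) (by decide))).elim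
    · exact h
  have h1458 : S {1,4,5,8} ⊆ {1,8} := by
    obtain ⟨F, hF, h⟩ := hex {1,8} {{1,5,8,9}, {1,4,8,9}, {1,4,5,8}}
      (by decide +kernel) (by simp) (by decide)
    simp only [Finset.mem_insert, Finset.mem_singleton] at hF
    obtain rfl | rfl | rfl := hF
    · exact (hmeet (by decide +kernel) (by decide) h
        (hfree {5,8,9} _ (by decide +kernel) (by decide))).elim
    · exact (hmeet (by decide +kernel) (by decide) h
        (hfree {4,8,9} _ (by decide +kernel) (by decide))).elim
    · exact h
  -- the edge `15` lies in the interval of `1458` or `1457`, and in that of `1256` or `0125`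
  have hleft : S {1,4,5,8} ⊆ {1,5} ∨ S {1,4,5,7} ⊆ {1,5} := by
    obtain ⟨F, hF, h⟩ := hex {1,4,5} {{1,4,5,8}, {1,4,5,7}}
      (by decide +kernel) (by simp) (by decide)
    simp only [Finset.mem_insert, Finset.mem_singleton] at hF
    obtain rfl | rfl := hF
    · exact .inl (hinter h h1458 (by decide))
    · exact .inr (hinter h (hfree {1,5,7} _ (by decide +kernel) (by decide)) (by decide))
  have hright : S {1,2,5,6} ⊆ {1,5} ∨ S {0,1,2,5} ⊆ {1,5} := by
    obtain ⟨F, hF, h⟩ := hex {1,2,5} {{1,2,5,6}, {0,1,2,5}}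
      (by decide +kernel) (by simp) (by decide)
    simp only [Finset.mem_insert, Finset.mem_singleton] at hF
    obtain rfl | rfl := hF
    · exact .inl (hinter h h1256 (by decide))
    · exact .inr (hinter h (hfree {0,1,5} _ (by decide +kernel) (by decide)) (by decide))
  rcases hleft with hl | hl <;> rcases hright with hr | hr <;>
    exact absurd (hedge _ (by decide +kernel) _ (by decide +kernel) (by decide) (by decide) hl hr)
      (by decide)

theorem glueVertex_injective (i : ℕ) : Function.Injective (glueVertex i) := by
  intro v w h
  unfold glueVertex at h
  split_ifs at h <;> simp_all

theorem phi_subset_phi {i : ℕ} {σ τ : Finset ℕ} : phi i σ ⊆ phi i τ ↔ σ ⊆ τ :=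
  Finset.image_subset_image_iff (glueVertex_injective i)

theorem phi_injective (i : ℕ) : Function.Injective (phi i) :=
  Finset.image_injective (glueVertex_injective i)

theorem mem_C {N : ℕ} {σ : Finset (ℕ ⊕ (ℕ × ℕ))} :
    σ ∈ C N ↔ ∃ i ∈ Finset.Icc 1 N, ∃ τ ∈ Xbar, phi i τ = σ := by
  simp only [C, Finset.mem_biUnion, Finset.mem_image]

/-- A face meeting the interior of the `i`-th copy lies in no other copy. -/
theorem eq_of_phi_subset_phi {i j : ℕ} {σ τ : Finset ℕ}
    (hσ : ¬ Disjoint σ privateVertices) (h : phi i σ ⊆ phi j τ) : i = j := by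
  obtain ⟨v, hv, hp⟩ := Finset.not_disjoint_iff.mp hσ
  obtain ⟨w, -, hw⟩ := Finset.mem_image.mp (h (Finset.mem_image_of_mem _ hv))
  simp only [privateVertices, Finset.mem_insert, Finset.mem_singleton] at hp
  unfold glueVertex at hw
  split_ifs at hw
  simp_all

theorem phi_eq_phi_of_disjoint {σ : Finset ℕ} (hσ : Disjoint σ privateVertices) (i j : ℕ) :
    phi i σ = phi j σ := by
  refine Finset.image_congr fun v hv => ?_
  have hp := Finset.disjoint_left.mp hσ hv
  simp only [privateVertices, Finset.mem_insert, Finset.mem_singleton] at hp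
  simp only [glueVertex, hp, if_false]

theorem phi_mem_facets_C {N i : ℕ} (hi : i ∈ Finset.Icc 1 N) {F : Finset ℕ}
    (hF : F ∈ facets Xbar) : phi i F ∈ facets (C N) := by
  have hd := facets_Xbar_not_disjoint F hF
  obtain ⟨hFX, hmax⟩ := Finset.mem_filter.mp hF
  refine Finset.mem_filter.mpr ⟨mem_C.mpr ⟨i, hi, F, hFX, rfl⟩, fun G hG hFG => ?_⟩
  obtain ⟨j, -, τ, hτ, rfl⟩ := mem_C.mp hG
  obtain rfl := eq_of_phi_subset_phi hd hFG
  rw [hmax τ hτ (phi_subset_phi.mp hFG)]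

/-- A facet of `C_N` that meets the interior of the `i`-th copy comes from a facet of that copy. -/
theorem exists_facet_of_phi_subset {N i : ℕ} {σ : Finset ℕ} {F : Finset (ℕ ⊕ (ℕ × ℕ))}
    (hσ : ¬ Disjoint σ privateVertices) (hF : F ∈ facets (C N)) (h : phi i σ ⊆ F) :
    ∃ G ∈ facets Xbar, phi i G = F := by
  obtain ⟨hFC, hmax⟩ := Finset.mem_filter.mp hF
  obtain ⟨j, hj, G, hG, rfl⟩ := mem_C.mp hFC
  obtain rfl := eq_of_phi_subset_phi hσ h
  refine ⟨G, Finset.mem_filter.mpr ⟨hG, fun H hH hGH => ?_⟩, rfl⟩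
  exact phi_injective i (hmax _ (mem_C.mpr ⟨i, hj, H, hH, rfl⟩) (phi_subset_phi.mpr hGH))

/-- In a partitioning of `C_N` with `N > 24`, pigeonhole on the 24 faces of `A` gives a copy of
`X̄` whose intervals avoid `A`, which is impossible. -/
theorem C_not_partitionable {N : ℕ} (hN : 24 < N) : ¬ Partitionable (C N) := by
  rintro ⟨R, hRF, -, hcov⟩
  have hpull : ∀ i ∈ Finset.Icc 1 N, ∀ F, ∃ σ, F ∈ facets Xbar → σ ⊆ F ∧ phi i σ = R (phi i F) := by
    intro i hi F
    by_cases hF : F ∈ facets Xbar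
    · obtain ⟨σ, hσ, h⟩ := Finset.subset_image_iff.mp (hRF _ (phi_mem_facets_C hi hF))
      exact ⟨σ, fun _ => ⟨Finset.coe_subset.mp hσ, h⟩⟩
    · exact ⟨∅, fun h => absurd h hF⟩
  choose! S hS using hpull
  have hbad : ∀ i ∈ Finset.Icc 1 N, ∃ F ∈ facets Xbar, Disjoint (S i F) privateVertices := by
    intro i hi
    by_contra! hgood
    refine relative_not_partitionable (S i) hgood fun σ hσ hd => ?_
    have hsub : ∀ {G}, G ∈ facets Xbar → (R (phi i G) ⊆ phi i σ ↔ S i G ⊆ σ) := fun hG => by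
      rw [← (hS i hi _ hG).2, phi_subset_phi]
    obtain ⟨F, ⟨hF, hRσ, hσF⟩, huniq⟩ := hcov (phi i σ) (mem_C.mpr ⟨i, hi, σ, hσ, rfl⟩)
    obtain ⟨G, hG, rfl⟩ := exists_facet_of_phi_subset hd hF hσF
    refine ⟨G, ⟨hG, (hsub hG).mp hRσ, phi_subset_phi.mp hσF⟩, fun H ⟨hH, hSH, hσH⟩ => ?_⟩
    exact phi_injective i
      (huniq _ ⟨phi_mem_facets_C hi hH, (hsub hH).mpr hSH, phi_subset_phi.mpr hσH⟩)
  choose! F hF hd using hbad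
  obtain ⟨i, hi, j, hj, hij, heq⟩ := Finset.exists_ne_map_eq_of_card_lt_of_maps_to
    (s := Finset.Icc 1 N) (t := Xbar.filter fun σ => Disjoint σ privateVertices)
    (f := fun i => S i (F i)) (card_Xbar_disjoint_le.trans_lt (by simpa using hN))
    (fun i hi => Finset.mem_filter.mpr
      ⟨mem_Xbar_iff.mpr ⟨F i, hF i hi, (hS i hi _ (hF i hi)).1⟩, hd i hi⟩)
  obtain ⟨hSi, hRi⟩ := hS i hi _ (hF i hi)
  obtain ⟨hSj, hRj⟩ := hS j hj _ (hF j hj)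
  have hphi : phi i (S i (F i)) = phi j (S j (F j)) := by
    rw [← heq, phi_eq_phi_of_disjoint (hd i hi) i j]
  have hfacet : phi i (F i) = phi j (F j) :=
    (hcov _ (mem_C.mpr ⟨i, hi, _, mem_Xbar_iff.mpr ⟨F i, hF i hi, hSi⟩, rfl⟩)).unique
      ⟨phi_mem_facets_C hi (hF i hi), hRi.ge, phi_subset_phi.mpr hSi⟩
      ⟨phi_mem_facets_C hj (hF j hj), (hphi.trans hRj).ge, hphi ▸ phi_subset_phi.mpr hSj⟩
  exact hij (eq_of_phi_subset_phi (facets_Xbar_not_disjoint _ (hF i hi)) hfacet.le)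

/-- The simplicial complex `C_25` obtained by gluing 25 disjoint copies of `X̄` along `A`
is not partitionable. -/
theorem C25_not_partitionable : ¬ Partitionable (C 25) :=
  C_not_partitionable (by norm_num)
end

section
/- The relative simplicial complex Q′ = X′ ∖ A′ is not partitionable, where X′ is the simplicial complex on vertices {1,4,5,7,8,9} generated by the facets 1589, 1489, 1458, 1457, 4578, and A′ is the subcomplex of X′ generated by the facets 489, 589, 578, 157. -/
/-- The simplicial complex `X′` on vertices `{1,4,5,7,8,9}` with five facets. -/
def X' : Finset (Finset ℕ) :=
  gen [{1,5,8,9},{1,4,8,9},{1,4,5,8},{1,4,5,7},{4,5,7,8}]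

/-- The subcomplex `A′` of `X′`, generated by the triangles 489, 589, 578, 157. -/
def A' : Finset (Finset ℕ) :=
  gen [{4,8,9},{5,8,9},{5,7,8},{1,5,7}]

/-- The facets of `Q′` are the five facets of `X′`. -/
theorem facets_Q' : facets (X' \ A') =
    {{1,5,8,9},{1,4,8,9},{1,4,5,8},{1,4,5,7},{4,5,7,8}} := by
  decide +kernel

/-- The relative simplicial complex `Q′ = X′ ∖ A′` is not partitionable. -/
theorem Q'_not_partitionable : ¬ Partitionable (X' \ A') := by
  rintro ⟨R, -, hmem, hcover⟩
  -- `R F` cannot lie in two faces of `F` whose intersection is missing from `Q′`.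
  have hinter : ∀ F ∈ facets (X' \ A'), ∀ σ τ : Finset ℕ, σ ⊆ F → σ ∩ τ ∉ X' \ A' →
      R F ⊆ σ → ¬ R F ⊆ τ := fun F hF σ τ hσ hn h₁ h₂ =>
    hn (hmem F hF _ (Finset.subset_inter h₁ h₂) (Finset.inter_subset_left.trans hσ))
  have hex : ∀ σ ∈ X' \ A', ∃ F ∈ facets (X' \ A'), σ ⊆ F ∧ R F ⊆ σ := fun σ hσ => by
    obtain ⟨F, ⟨hF, h₁, h₂⟩, -⟩ := hcover σ hσ
    exact ⟨F, hF, h₂, h₁⟩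
  -- A face contained in a unique facet `F` contains `R F`.
  have hfree : ∀ F, ∀ σ ∈ X' \ A', (∀ G ∈ facets (X' \ A'), σ ⊆ G → G = F) → R F ⊆ σ := by
    intro F σ hσ huniq
    obtain ⟨G, hG, h₁, h₂⟩ := hex σ hσ
    exact huniq G hG h₁ ▸ h₂
  rw [facets_Q'] at hinter hex hfree
  have h159 := hfree {1,5,8,9} {1,5,9} (by decide +kernel) (by decide +kernel)
  have h149 := hfree {1,4,8,9} {1,4,9} (by decide +kernel) (by decide +kernel)
  have h147 := hfree {1,4,5,7} {1,4,7} (by decide +kernel) (by decide +kernel)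
  have h478 := hfree {4,5,7,8} {4,7,8} (by decide +kernel) (by decide +kernel)
  -- Hence only the facet `1458` can cover the edges `18` and `45`.
  have h18 : R {1,4,5,8} ⊆ {1,8} := by
    obtain ⟨F, hF, hσ, hR⟩ := hex {1,8} (by decide +kernel)
    simp only [Finset.mem_insert, Finset.mem_singleton] at hF
    rcases hF with rfl | rfl | rfl | rfl | rfl
    · exact absurd hR (hinter _ (by decide) _ _ (by decide) (by decide +kernel) h159)
    · exact absurd hR (hinter _ (by decide) _ _ (by decide) (by decide +kernel) h149)
    · exact hR
    · exact absurd hσ (by decide)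
    · exact absurd hσ (by decide)
  have h45 : R {1,4,5,8} ⊆ {4,5} := by
    obtain ⟨F, hF, hσ, hR⟩ := hex {4,5} (by decide +kernel)
    simp only [Finset.mem_insert, Finset.mem_singleton] at hF
    rcases hF with rfl | rfl | rfl | rfl | rfl
    · exact absurd hσ (by decide)
    · exact absurd hσ (by decide)
    · exact hR
    · exact absurd hR (hinter _ (by decide) _ _ (by decide) (by decide +kernel) h147)
    · exact absurd hR (hinter _ (by decide) _ _ (by decide) (by decide +kernel) h478)
  exact hinter _ (by decide) _ _ (by decide) (by decide +kernel) h18 h45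
end

section
/- The ordering 1249, 1269, 1569, 1589, 1489, 1458, 1457, 4578, 1256, 0125, 0256, 0123, 1234, 1347 of the facets of X̄ is a shelling of X̄; in particular X̄ is shellable. -/
/-- A list `L = [F_1, …, F_n]` is a shelling of the pure simplicial complex `Δ` if it is
an ordering of the facets of `Δ` without repetition such that for every `j`, the set
`{σ ⊆ F_j : σ ⊄ F_i for all i < j}` has a unique minimal element `R_j` (equivalently,
a minimum element `R_j`). -/
def IsShelling {V : Type*} [DecidableEq V] (Δ : Finset (Finset V)) (L : List (Finset V)) :
    Prop :=
  L.Nodup ∧ (∀ F, F ∈ L ↔ F ∈ facets Δ) ∧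
    ∀ j : Fin L.length, ∃ R : Finset V,
      (R ⊆ L.get j ∧ ∀ i : Fin L.length, i < j → ¬ R ⊆ L.get i) ∧
      (∀ σ : Finset V, σ ⊆ L.get j → (∀ i : Fin L.length, i < j → ¬ σ ⊆ L.get i) → R ⊆ σ)

/-- A pure simplicial complex is shellable if it admits a shelling. -/
def Shellable {V : Type*} [DecidableEq V] (Δ : Finset (Finset V)) : Prop :=
  ∃ L : List (Finset V), IsShelling Δ L

/-- If no member of `L` is contained in another, then the facets of the complex generated by `L`
are exactly the members of `L`. -/
theorem mem_facets_gen {L : List (Finset ℕ)} (hL : ∀ F ∈ L, ∀ G ∈ L, F ⊆ G → F = G)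
    (F : Finset ℕ) : F ∈ facets (gen L) ↔ F ∈ L := by
  simp only [facets, Finset.mem_filter, mem_gen]
  constructor
  · rintro ⟨⟨G, hG, hFG⟩, hmax⟩
    rwa [hmax G ⟨G, hG, subset_rfl⟩ hFG]
  · refine fun hF => ⟨⟨F, hF, subset_rfl⟩, ?_⟩
    rintro G ⟨H, hH, hGH⟩ hFG
    obtain rfl := hL F hF H hH (hFG.trans hGH)
    exact hFG.antisymm hGH

/-- The restriction of the `j`-th member `F` of `L`: the vertices `v` of `F` such that the
ridge `F \ {v}` lies in an earlier member of `L`. -/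
def restriction (L : List (Finset ℕ)) (j : Fin L.length) : Finset ℕ :=
  (L.get j).filter fun v => ∃ i : Fin L.length, i < j ∧ (L.get j).erase v ⊆ L.get i

theorem restriction_subset_of_not_subset {L : List (Finset ℕ)} {j : Fin L.length}
    {σ : Finset ℕ} (hσ : σ ⊆ L.get j) (hnew : ∀ i : Fin L.length, i < j → ¬ σ ⊆ L.get i) :
    restriction L j ⊆ σ := by
  intro v hv
  obtain ⟨-, i, hij, hi⟩ := Finset.mem_filter.mp hv
  by_contra hvσ
  exact hnew i hij ((Finset.subset_erase.mpr ⟨hσ, hvσ⟩).trans hi)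

/-- A repetition-free antichain in which no restriction lies in an earlier member is a shelling of
the complex it generates. -/
theorem isShelling_gen {L : List (Finset ℕ)} (hnodup : L.Nodup)
    (hanti : ∀ F ∈ L, ∀ G ∈ L, F ⊆ G → F = G)
    (hnew : ∀ j i : Fin L.length, i < j → ¬ restriction L j ⊆ L.get i) :
    IsShelling (gen L) L :=
  ⟨hnodup, fun F => (mem_facets_gen hanti F).symm, fun j =>
    ⟨restriction L j, ⟨Finset.filter_subset _ _, hnew j⟩,
      fun _ hσ hσnew => restriction_subset_of_not_subset hσ hσnew⟩⟩

/-- The given ordering of the fourteen facets of `X̄` is a shelling; in particular `X̄`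
is shellable. -/
theorem Xbar_shelling :
    IsShelling Xbar
      [{1,2,4,9},{1,2,6,9},{1,5,6,9},{1,5,8,9},{1,4,8,9},{1,4,5,8},{1,4,5,7},
       {4,5,7,8},{1,2,5,6},{0,1,2,5},{0,2,5,6},{0,1,2,3},{1,2,3,4},{1,3,4,7}] ∧
    Shellable Xbar := by
  have h := isShelling_gen (L :=
      [{1,2,4,9},{1,2,6,9},{1,5,6,9},{1,5,8,9},{1,4,8,9},{1,4,5,8},{1,4,5,7},
       {4,5,7,8},{1,2,5,6},{0,1,2,5},{0,2,5,6},{0,1,2,3},{1,2,3,4},{1,3,4,7}])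
    (by decide +kernel) (by decide +kernel) (by decide +kernel)
  exact ⟨h, _, h⟩
end

section
/- The permutation τ = (0 7)(2 4)(6 8) of {0,1,…,9} (the product of the three transpositions swapping 0 ↔ 7, 2 ↔ 4, and 6 ↔ 8, fixing the other vertices) is a simplicial automorphism of X̄: for every finite subset σ of {0,1,…,9}, σ is a face of X̄ if and only if τ(σ) = {τ(v) : v ∈ σ} is a face of X̄. Moreover τ maps A to A, and hence maps the relative complex Q = X̄ ∖ A to itself. -/
/-- The permutation `τ = (0 7)(2 4)(6 8)` of the vertices, fixing all other vertices. -/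
def tau : ℕ → ℕ := fun v =>
  if v = 0 then 7 else if v = 7 then 0 else
  if v = 2 then 4 else if v = 4 then 2 else
  if v = 6 then 8 else if v = 8 then 6 else v

theorem tau_involutive : Function.Involutive tau := by
  intro v
  rcases lt_or_ge v 9 with h | h
  · interval_cases v <;> rfl
  · have hv : tau v = v := by
      unfold tau
      split_ifs <;> omega
    rw [hv, hv]

/-- An involution of the vertices permuting the facets preserves the generated complex. -/
theorem mem_gen_iff_image_mem_gen {L : List (Finset ℕ)} {f : ℕ → ℕ}
    (hf : Function.Involutive f) (hL : ∀ F ∈ L, F.image f ∈ L) (σ : Finset ℕ) :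
    σ ∈ gen L ↔ σ.image f ∈ gen L := by
  have image_mem : ∀ ρ ∈ gen L, ρ.image f ∈ gen L := fun ρ hρ => by
    obtain ⟨F, hF, hρF⟩ := mem_gen.1 hρ
    exact mem_gen.2 ⟨F.image f, hL F hF, Finset.image_subset_image hρF⟩
  refine ⟨image_mem σ, fun h => ?_⟩
  simpa [Finset.image_image, hf.comp_self] using image_mem _ h

/-- The permutation `τ = (0 7)(2 4)(6 8)` is a simplicial automorphism of `X̄`: a finite
set `σ` of vertices is a face of `X̄` if and only if `τ(σ)` is.  Moreover `τ` maps `A` to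
`A`, and hence maps the relative complex `Q = X̄ ∖ A` to itself. -/
theorem tau_automorphism :
    (∀ σ : Finset ℕ, σ ∈ Xbar ↔ σ.image tau ∈ Xbar) ∧
    (∀ σ : Finset ℕ, σ ∈ Acx ↔ σ.image tau ∈ Acx) ∧
    (∀ σ : Finset ℕ, σ ∈ Xbar \ Acx ↔ σ.image tau ∈ Xbar \ Acx) := by
  have hX : ∀ σ : Finset ℕ, σ ∈ Xbar ↔ σ.image tau ∈ Xbar :=
    mem_gen_iff_image_mem_gen tau_involutive (by decide)
  have hA : ∀ σ : Finset ℕ, σ ∈ Acx ↔ σ.image tau ∈ Acx :=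
    mem_gen_iff_image_mem_gen tau_involutive (by decide)
  refine ⟨hX, hA, fun σ => ?_⟩
  rw [Finset.mem_sdiff, Finset.mem_sdiff, hX σ, hA σ]
end

section
/- Every pure shellable simplicial complex is partitionable. More precisely, if F_1,…,F_n is a shelling of a pure simplicial complex Δ and, for each j, R_j is the unique minimal element of {σ ⊆ F_j : σ ⊄ F_i for all i < j}, then Δ is the disjoint union of the Boolean intervals [R_1,F_1],…,[R_n,F_n], so these intervals form a partitioning of Δ. -/
/-- Every face is contained in a facet. -/
theorem exists_facet_superset {V : Type*} [DecidableEq V] {Φ : Finset (Finset V)}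
    {σ : Finset V} (hσ : σ ∈ Φ) : ∃ F ∈ facets Φ, σ ⊆ F := by
  obtain ⟨F, hσF, hF⟩ := Φ.exists_le_maximal hσ
  exact ⟨F, Finset.mem_filter.2 ⟨hF.prop, fun G hG hFG => hF.eq_of_le hG hFG⟩, hσF⟩

/-- Every pure shellable simplicial complex is partitionable.  More precisely, if
`L = [F_1, …, F_n]` is a shelling of the pure simplicial complex `Δ` (an ordering of the
facets such that for each `j` the set `{σ ⊆ F_j : σ ⊄ F_i for all i < j}` has unique
minimal element `R_j`), then `Δ` is the disjoint union of the Boolean intervals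
`[R_j, F_j]` — each face of `Δ` lies in exactly one interval `[R_j, F_j]`, and
conversely — so these intervals form a partitioning of `Δ` and `Δ` is partitionable. -/
theorem shellable_implies_partitionable
    {V : Type*} [DecidableEq V] (Δ : Finset (Finset V))
    (hcomplex : ∀ σ ∈ Δ, ∀ τ ⊆ σ, τ ∈ Δ)
    (hpure : ∀ F ∈ facets Δ, ∀ G ∈ facets Δ, F.card = G.card)
    (L : List (Finset V)) (hnd : L.Nodup) (hfac : ∀ F, F ∈ L ↔ F ∈ facets Δ)
    (R : Fin L.length → Finset V)
    (hmin : ∀ j : Fin L.length,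
      (R j ⊆ L.get j ∧ ∀ i : Fin L.length, i < j → ¬ R j ⊆ L.get i) ∧
      (∀ σ : Finset V, σ ⊆ L.get j → (∀ i : Fin L.length, i < j → ¬ σ ⊆ L.get i) →
        R j ⊆ σ)) :
    (∀ σ : Finset V, σ ∈ Δ ↔ ∃! j : Fin L.length, R j ⊆ σ ∧ σ ⊆ L.get j) ∧
      Partitionable Δ := by
  have hget (j : Fin L.length) : L.get j ∈ facets Δ := (hfac _).1 (L.get_mem j)
  have hsurj (F : Finset V) (hF : F ∈ facets Δ) : ∃ j, L.get j = F :=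
    List.mem_iff_get.1 ((hfac F).2 hF)
  have hface (j : Fin L.length) {σ : Finset V} (hσ : σ ⊆ L.get j) : σ ∈ Δ :=
    hcomplex _ (Finset.mem_filter.1 (hget j)).1 σ hσ
  have hunique (σ : Finset V) (hσ : σ ∈ Δ) :
      ∃! j : Fin L.length, R j ⊆ σ ∧ σ ⊆ L.get j := by
    -- The interval containing `σ` belongs to the first facet containing `σ`.
    have hex : ∃ j : Fin L.length, σ ⊆ L.get j := by
      obtain ⟨F, hF, hσF⟩ := exists_facet_superset hσ
      obtain ⟨j, rfl⟩ := hsurj F hF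
      exact ⟨j, hσF⟩
    obtain ⟨j, hj, hfirst⟩ := WellFounded.has_min (wellFounded_lt (α := Fin L.length))
      {j | σ ⊆ L.get j} hex
    refine ⟨j, ⟨(hmin j).2 σ hj fun i hi h => hfirst i h hi, hj⟩, ?_⟩
    rintro k ⟨hRk, hk⟩
    refine le_antisymm (not_lt.1 fun hjk => ?_) (not_lt.1 (hfirst k hk))
    exact (hmin k).1.2 j hjk (hRk.trans hj)
  refine ⟨fun σ => ⟨hunique σ, fun ⟨j, hj, _⟩ => hface j hj.2⟩, ?_⟩
  have hinj : Function.Injective L.get := List.nodup_iff_injective_get.1 hnd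
  have hext (j : Fin L.length) : Function.extend L.get R id (L.get j) = R j :=
    hinj.extend_apply R id j
  refine ⟨Function.extend L.get R id, fun F hF => ?_, fun F hF σ _ hσF => ?_, fun σ hσ => ?_⟩
  · obtain ⟨j, rfl⟩ := hsurj F hF
    rw [hext]
    exact (hmin j).1.1
  · exact hcomplex F (Finset.mem_filter.1 hF).1 σ hσF
  · obtain ⟨j, hj, huniq⟩ := hunique σ hσ
    refine ⟨L.get j, ⟨hget j, by rw [hext]; exact hj.1, hj.2⟩, ?_⟩
    rintro G ⟨hG, hRG, hσG⟩
    obtain ⟨k, rfl⟩ := hsurj G hG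
    rw [hext] at hRG
    rw [huniq k ⟨hRG, hσG⟩]
end
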